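/- Let T > 0, let A : [0,T] → [0,∞) be continuous, nondecreasing with A(0) = 0, and let dA denote its Lebesgue–Stieltjes measure. Let μ > 0, κ ≥ 0, and let h, ψ, y : [0,T] → ℝ be Borel measurable functions such that |h(s)| ≤ ψ(s) + κ·|y(s)| for every s ∈ [0,T]. Then for every t ∈ [0,T], if h is dA-integrable on (0,t], one has (∫_{(0,t]} h(s) dA(s))² ≤ (2/μ) ∫_{(0,t]} e^{μ A(s)} (ψ(s)² + κ² y(s)²) dA(s). -/

import Mathlib

open MeasureTheory Set Real

/-! Since `ν` gives the sublevel set `{s ∈ (a, b] | A s - A a ≤ c}` mass at most `c`, the law of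
`A - A a` under `ν` stochastically dominates Lebesgue measure on `(0, ∞)`. Hence
`∫ exp (-μ (A - A a)) ∂ν ≤ ∫₀^∞ exp (-μ x) dx = 1 / μ`; jumps of `A` only help. Cauchy–Schwarz with
the weight `exp (μ (A - A a))` and `(ψ + κ‖y‖)² ≤ 2 (ψ² + κ²‖y‖²)` give the estimate. -/

lemma lintegral_exp_neg_mul_Ioi {μ : ℝ} (hμ : 0 < μ) :
    ∫⁻ x in Ioi (0 : ℝ), ENNReal.ofReal (exp (-(μ * x))) = ENNReal.ofReal (1 / μ) := by
  simp_rw [← neg_mul]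
  rw [← ofReal_integral_eq_lintegral_ofReal (exp_neg_integrableOn_Ioi 0 hμ)
      (.of_forall fun _ ↦ (exp_pos _).le), integral_exp_mul_Ioi (neg_lt_zero.2 hμ)]
  simp

lemma ofReal_mul_enorm_sq_le_of_norm_le_add {E : Type*} [SeminormedAddCommGroup E] {v : E}
    {r p q : ℝ} (hr : 0 ≤ r) (hv : ‖v‖ ≤ p + q) :
    ENNReal.ofReal r * ‖v‖ₑ ^ 2 ≤ ENNReal.ofReal 2 * ENNReal.ofReal (r * (p ^ 2 + q ^ 2)) := by
  rw [← ofReal_norm, ← ENNReal.ofReal_pow (norm_nonneg _), ← ENNReal.ofReal_mul hr,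
    ← ENNReal.ofReal_mul zero_le_two, mul_left_comm]
  gcongr
  exact (pow_le_pow_left₀ (norm_nonneg _) hv 2).trans add_sq_le

section WeightedIntegrals

variable {α : Type*} [MeasurableSpace α] {ν : Measure α}

lemma sq_lintegral_le_lintegral_inv_mul_lintegral_mul_sq {w f : α → ENNReal}
    (hw : AEMeasurable w ν) (hf : AEMeasurable f ν) (hw_zero : ∀ s, w s ≠ 0)
    (hw_top : ∀ s, w s ≠ ⊤) :
    (∫⁻ s, f s ∂ν) ^ 2 ≤ (∫⁻ s, (w s)⁻¹ ∂ν) * ∫⁻ s, w s * f s ^ 2 ∂ν := by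
  have sq_rpow_half (x : ENNReal) : (x ^ 2) ^ (1 / 2 : ℝ) = x := by
    rw [← ENNReal.rpow_two, ← ENNReal.rpow_mul]
    norm_num
  have rpow_half_sq (x : ENNReal) : (x ^ (1 / 2 : ℝ)) ^ 2 = x := by
    rw [← ENNReal.rpow_two, ← ENNReal.rpow_mul]
    norm_num
  have f_eq (s : α) : f s = (w s)⁻¹ ^ (1 / 2 : ℝ) * (w s * f s ^ 2) ^ (1 / 2 : ℝ) := by
    rw [← ENNReal.mul_rpow_of_nonneg _ _ (by norm_num), ← mul_assoc,
      ENNReal.inv_mul_cancel (hw_zero s) (hw_top s), one_mul, sq_rpow_half]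
  calc (∫⁻ s, f s ∂ν) ^ 2
      = (∫⁻ s, (w s)⁻¹ ^ (1 / 2 : ℝ) * (w s * f s ^ 2) ^ (1 / 2 : ℝ) ∂ν) ^ 2 := by
        simp_rw [← f_eq]
    _ ≤ ((∫⁻ s, (w s)⁻¹ ∂ν) ^ (1 / 2 : ℝ) * (∫⁻ s, w s * f s ^ 2 ∂ν) ^ (1 / 2 : ℝ)) ^ 2 := by
        gcongr
        exact ENNReal.lintegral_mul_norm_pow_le hw.inv (hw.mul (hf.pow_const 2))
          (by norm_num) (by norm_num) (by norm_num)
    _ = (∫⁻ s, (w s)⁻¹ ∂ν) * ∫⁻ s, w s * f s ^ 2 ∂ν := by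
        rw [mul_pow, rpow_half_sq, rpow_half_sq]

lemma measure_lt_antitone_comp_le_volume_Ioi {f : α → ℝ} {φ : ℝ → ℝ} (hφ : Antitone φ)
    (hf : ∀ c, ν {s | f s ≤ c} ≤ ENNReal.ofReal c) (r : ℝ) :
    ν {s | r < φ (f s)} ≤ volume.restrict (Ioi 0) {x | r < φ x} := by
  set m := volume.restrict (Ioi 0) {x | r < φ x}
  rcases eq_or_ne m ⊤ with hm | hm
  · exact hm ▸ le_top
  have ofReal_le {s : α} (hs : r < φ (f s)) : ENNReal.ofReal (f s) ≤ m :=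
    calc ENNReal.ofReal (f s) = volume (Ioc 0 (f s)) := by rw [Real.volume_Ioc, sub_zero]
      _ ≤ volume ({x | r < φ x} ∩ Ioi 0) :=
        measure_mono fun x hx ↦ ⟨hs.trans_le (hφ hx.2), hx.1⟩
      _ = m := (Measure.restrict_apply' measurableSet_Ioi).symm
  calc ν {s | r < φ (f s)} ≤ ν {s | f s ≤ m.toReal} :=
        measure_mono fun s hs ↦ (ENNReal.ofReal_le_iff_le_toReal hm).1 (ofReal_le hs)
    _ ≤ ENNReal.ofReal m.toReal := hf _
    _ = m := ENNReal.ofReal_toReal hm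

lemma lintegral_antitone_comp_le_lintegral_Ioi {f : α → ℝ} {φ : ℝ → ℝ} (hφ : Antitone φ)
    (hφ_nonneg : ∀ x, 0 ≤ φ x) (hf_meas : AEMeasurable f ν)
    (hf : ∀ c, ν {s | f s ≤ c} ≤ ENNReal.ofReal c) :
    ∫⁻ s, ENNReal.ofReal (φ (f s)) ∂ν ≤ ∫⁻ x in Ioi 0, ENNReal.ofReal (φ x) := by
  rw [lintegral_eq_lintegral_meas_lt ν (.of_forall fun s ↦ hφ_nonneg (f s))
      (hφ.measurable.comp_aemeasurable hf_meas),
    lintegral_eq_lintegral_meas_lt _ (.of_forall hφ_nonneg) hφ.measurable.aemeasurable]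
  exact lintegral_mono fun r ↦ measure_lt_antitone_comp_le_volume_Ioi hφ hf r

end WeightedIntegrals

section Stieltjes

variable {α : Type*} [LinearOrder α] [TopologicalSpace α] [OrderTopology α] [PolishSpace α]
  [MeasurableSpace α] [BorelSpace α] {ν : Measure α} {a b : α}

lemma measure_Ioc_inter_sublevel_le {f : α → ℝ} (hf : MonotoneOn f (Ioc a b))
    (hν : ∀ x ∈ Ioc a b, ν (Ioc a x) ≤ ENNReal.ofReal (f x)) (c : ℝ) :
    ν (Ioc a b ∩ {s | f s ≤ c}) ≤ ENNReal.ofReal c := by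
  set S := Ioc a b ∩ {s | f s ≤ c}
  rcases S.eq_empty_or_nonempty with hS | ⟨s₀, hs₀, -⟩
  · simp [hS]
  have hS_meas : MeasurableSet S := by
    refine OrdConnected.measurableSet ⟨fun x hx z hz s hs ↦ ?_⟩
    have hs_mem : s ∈ Ioc a b := ⟨hx.1.1.trans_le hs.1, hs.2.trans hz.1.2⟩
    exact ⟨hs_mem, (hf hs_mem hz.1 hs.2).trans hz.2⟩
  have hS_top : ν S ≠ ⊤ := by
    have hb : ν (Ioc a b) ≤ ENNReal.ofReal (f b) := hν b ⟨hs₀.1.trans_le hs₀.2, le_rfl⟩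
    exact ne_top_of_le_ne_top ENNReal.ofReal_ne_top ((measure_mono inter_subset_left).trans hb)
  -- `S` may lack a greatest element when `f` jumps, but its compact subsets do not.
  rw [hS_meas.measure_eq_iSup_isCompact_of_ne_top hS_top]
  refine iSup₂_le fun K hKS ↦ iSup_le fun hK ↦ ?_
  rcases K.eq_empty_or_nonempty with rfl | hK_nonempty
  · simp
  obtain ⟨m, hmK, hm⟩ := hK.exists_isGreatest hK_nonempty
  calc ν K ≤ ν (Ioc a m) := measure_mono fun s hs ↦ ⟨(hKS hs).1.1, hm hs⟩
    _ ≤ ENNReal.ofReal (f m) := hν m (hKS hmK).1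
    _ ≤ ENNReal.ofReal c := ENNReal.ofReal_le_ofReal (hKS hmK).2

lemma setLIntegral_exp_neg_mul_le {f : α → ℝ} {μ : ℝ} (hμ : 0 < μ) (hf : MonotoneOn f (Ioc a b))
    (hν : ∀ x ∈ Ioc a b, ν (Ioc a x) ≤ ENNReal.ofReal (f x)) :
    ∫⁻ s in Ioc a b, ENNReal.ofReal (exp (-(μ * f s))) ∂ν ≤ ENNReal.ofReal (1 / μ) := by
  rw [← lintegral_exp_neg_mul_Ioi hμ]
  refine lintegral_antitone_comp_le_lintegral_Ioi (φ := fun x ↦ exp (-(μ * x)))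
    (fun x y hxy ↦ exp_le_exp.2 (neg_le_neg (mul_le_mul_of_nonneg_left hxy hμ.le)))
    (fun _ ↦ (exp_pos _).le) (aemeasurable_restrict_of_monotoneOn measurableSet_Ioc hf)
    fun c ↦ ?_
  rw [Measure.restrict_apply' measurableSet_Ioc, inter_comm]
  exact measure_Ioc_inter_sublevel_le hf hν c

lemma sq_setLIntegral_le_mul_setLIntegral_exp_mul_sq {f : α → ℝ} {g : α → ENNReal} {μ : ℝ}
    (hμ : 0 < μ) (hf : MonotoneOn f (Ioc a b))
    (hν : ∀ x ∈ Ioc a b, ν (Ioc a x) ≤ ENNReal.ofReal (f x))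
    (hg : AEMeasurable g (ν.restrict (Ioc a b))) :
    (∫⁻ s in Ioc a b, g s ∂ν) ^ 2 ≤ ENNReal.ofReal (1 / μ) *
      ∫⁻ s in Ioc a b, ENNReal.ofReal (exp (μ * f s)) * g s ^ 2 ∂ν := by
  have hf_meas : AEMeasurable f (ν.restrict (Ioc a b)) :=
    aemeasurable_restrict_of_monotoneOn measurableSet_Ioc hf
  refine (sq_lintegral_le_lintegral_inv_mul_lintegral_mul_sq
    (w := fun s ↦ ENNReal.ofReal (exp (μ * f s))) (by fun_prop) hg
    (fun _ ↦ by simp [exp_pos]) (fun _ ↦ ENNReal.ofReal_ne_top)).trans ?_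
  gcongr
  simp_rw [← ENNReal.ofReal_inv_of_pos (exp_pos _), ← exp_neg]
  exact setLIntegral_exp_neg_mul_le hμ hf hν

theorem stmt0_general {E F : Type*} [NormedAddCommGroup E] [NormedSpace ℝ E] [CompleteSpace E]
    [SeminormedAddCommGroup F] {A : α → ℝ} (hA_mono : MonotoneOn A (Icc a b))
    (hν : ∀ x ∈ Icc a b, ν (Ioc a x) = ENNReal.ofReal (A x - A a))
    {μ κ : ℝ} (hμ : 0 < μ) {h : α → E} {ψ : α → ℝ} {y : α → F}
    (hbound : ∀ s ∈ Ioc a b, ‖h s‖ ≤ ψ s + κ * ‖y s‖) (hint : IntegrableOn h (Ioc a b) ν) :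
    ENNReal.ofReal (‖∫ s in Ioc a b, h s ∂ν‖ ^ 2) ≤ ENNReal.ofReal (2 / μ) *
      ∫⁻ s in Ioc a b,
        ENNReal.ofReal (exp (μ * (A s - A a)) * (ψ s ^ 2 + κ ^ 2 * ‖y s‖ ^ 2)) ∂ν := by
  have hf_mono : MonotoneOn (fun s ↦ A s - A a) (Ioc a b) := fun _ hs _ ht hst ↦
    sub_le_sub_right (hA_mono (Ioc_subset_Icc_self hs) (Ioc_subset_Icc_self ht) hst) _
  calc ENNReal.ofReal (‖∫ s in Ioc a b, h s ∂ν‖ ^ 2)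
      = ‖∫ s in Ioc a b, h s ∂ν‖ₑ ^ 2 := by
        rw [ENNReal.ofReal_pow (norm_nonneg _), ofReal_norm]
    _ ≤ (∫⁻ s in Ioc a b, ‖h s‖ₑ ∂ν) ^ 2 := by
        gcongr
        exact enorm_integral_le_lintegral_enorm _
    _ ≤ ENNReal.ofReal (1 / μ) *
          ∫⁻ s in Ioc a b, ENNReal.ofReal (exp (μ * (A s - A a))) * ‖h s‖ₑ ^ 2 ∂ν :=
        sq_setLIntegral_le_mul_setLIntegral_exp_mul_sq hμ hf_mono
          (fun x hx ↦ (hν x (Ioc_subset_Icc_self hx)).le) hint.aestronglyMeasurable.enorm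
    _ ≤ ENNReal.ofReal (1 / μ) * ∫⁻ s in Ioc a b, ENNReal.ofReal 2 *
          ENNReal.ofReal (exp (μ * (A s - A a)) * (ψ s ^ 2 + κ ^ 2 * ‖y s‖ ^ 2)) ∂ν := by
        gcongr _ * ?_
        refine setLIntegral_mono' measurableSet_Ioc fun s hs ↦ ?_
        rw [← mul_pow]
        exact ofReal_mul_enorm_sq_le_of_norm_le_add (exp_pos _).le (hbound s hs)
    _ = ENNReal.ofReal (2 / μ) * ∫⁻ s in Ioc a b,
          ENNReal.ofReal (exp (μ * (A s - A a)) * (ψ s ^ 2 + κ ^ 2 * ‖y s‖ ^ 2)) ∂ν := by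
        rw [lintegral_const_mul' _ _ ENNReal.ofReal_ne_top, ← mul_assoc,
          ← ENNReal.ofReal_mul (by positivity), one_div_mul_eq_div]

end Stieltjes

/-- Remark 2.1 (first bullet, Stieltjes part): pathwise estimate for the Stieltjes
integral of a function with linear growth. -/
theorem stmt0
    (T : ℝ) (hT : 0 < T)
    (A : ℝ → ℝ)
    (hA_cont : ContinuousOn A (Icc 0 T))
    (hA_mono : MonotoneOn A (Icc 0 T))
    (hA0 : A 0 = 0)
    (hA_nonneg : ∀ s ∈ Icc 0 T, 0 ≤ A s)
    (ν : Measure ℝ)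
    (hν : ∀ a b : ℝ, 0 ≤ a → a ≤ b → b ≤ T → ν (Ioc a b) = ENNReal.ofReal (A b - A a))
    (μ κ : ℝ) (hμ : 0 < μ) (hκ : 0 ≤ κ)
    (h ψ y : ℝ → ℝ)
    (hh : Measurable h) (hψ : Measurable ψ) (hy : Measurable y)
    (hbound : ∀ s ∈ Icc 0 T, |h s| ≤ ψ s + κ * |y s|)
    (t : ℝ) (ht : t ∈ Icc 0 T)
    (hint : IntegrableOn h (Ioc 0 t) ν) :
    ENNReal.ofReal ((∫ s in Ioc 0 t, h s ∂ν) ^ 2)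
      ≤ ENNReal.ofReal (2 / μ) *
        ∫⁻ s in Ioc 0 t,
          ENNReal.ofReal (Real.exp (μ * A s) * ((ψ s) ^ 2 + κ ^ 2 * (y s) ^ 2)) ∂ν := by
  simpa only [hA0, sub_zero, norm_eq_abs, sq_abs] using stmt0_general (h := h) (y := y)
    (hA_mono.mono (Icc_subset_Icc_right ht.2))
    (fun x hx ↦ hν 0 x le_rfl hx.1 (hx.2.trans ht.2)) hμ
    (fun s hs ↦ hbound s ⟨hs.1.le, hs.2.trans ht.2⟩) hint
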